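/- Let δ ∈ [0,1) and B = (1+δ)/(1−δ). For every set covering game (with any finite number of agents) with utility basis u*_δ and uncertainty at most δ, every equilibrium a, and every joint action a', it holds that W(a; y_true) ≥ (1 − e^{−1/B}) · W(a'; y_true). -/

import Mathlib

/-! The argument is the smoothness method for the price of anarchy.

Write `b = 1 / B`, `E = e ^ b - 1` and `u = uStar δ`. The series defining `u` gives `u 1 = 1`, and
splitting off its first term gives the recurrence `B * j * u j = u (j + 1) + 1 / E` for `j ≥ 1`
(`uStar_rec`). Comparing the series termwise shows that `u` is nonnegative and nonincreasing on
`j ≥ 1`.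

At a resource, let `α`, `x`, `ζ` count the agents using it in `a` only, in both `a` and `a'`, and
in `a'` only. The recurrence and the monotonicity of `u` yield (`local_bound`)
`B * α * u (α + x) - ζ * u (α + x + 1) ≤ (1 + 1 / E) * w (α + x) - w (x + ζ)`.

For an agent `i`, the equilibrium inequality for the deviation `a' i` only involves the resources
in the symmetric difference of `a i` and `a' i`, because a resource in both contributes the same
amount before and after the deviation (`equilibrium_sum_nonneg`). Bounding the perceived values
by `(1 + δ) * ytrue` on `a i \ a' i` and by `(1 - δ) * ytrue` on `a' i \ a i`, dividing by `1 - δ`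
and summing over the agents shows that the left sides of the local bounds, weighted by `ytrue`,
have a nonnegative sum. Hence `W(a') ≤ (1 + 1 / E) * W(a)`, and `1 + 1 / E = 1 / (1 - e ^ (-b))`. -/

open Finset Filter

/-- A resource allocation game with `n` agents: a finite set of resources
(encoded as a `Finset ℕ`), nonempty finite action sets consisting of subsets of
the resources, true resource values and perceived resource values. -/
structure ResourceGame (n : ℕ) where
  R : Finset ℕ
  A : Fin n → Finset (Finset ℕ)
  A_nonempty : ∀ i, (A i).Nonempty
  A_sub : ∀ i, ∀ s ∈ A i, s ⊆ R
  ytrue : ℕ → ℝ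
  ytrue_pos : ∀ r ∈ R, 0 < ytrue r
  y : Fin n → ℕ → ℝ
  y_nonneg : ∀ i r, 0 ≤ y i r

/-- A joint action is admissible if each agent's action belongs to its action set. -/
def Admissible {n : ℕ} (G : ResourceGame n) (a : Fin n → Finset ℕ) : Prop :=
  ∀ i, a i ∈ G.A i

/-- `|a|_r`: the number of agents selecting resource `r` in joint action `a`. -/
def load {n : ℕ} (a : Fin n → Finset ℕ) (r : ℕ) : ℕ :=
  (Finset.univ.filter (fun i => r ∈ a i)).card

/-- The welfare `W(a; val) = Σ_{r ∈ R} val(r)·w(|a|_r)`. -/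
noncomputable def welfare {n : ℕ} (G : ResourceGame n) (w : ℕ → ℝ) (val : ℕ → ℝ)
    (a : Fin n → Finset ℕ) : ℝ :=
  ∑ r ∈ G.R, val r * w (load a r)

/-- The utility of agent `i`: `U_i(a) = Σ_{r ∈ a_i} y_i(r)·u(|a|_r)`. -/
noncomputable def util {n : ℕ} (G : ResourceGame n) (u : ℕ → ℝ) (i : Fin n)
    (a : Fin n → Finset ℕ) : ℝ :=
  ∑ r ∈ a i, G.y i r * u (load a r)

/-- A joint action is an equilibrium if it is admissible and no agent can improve
its own utility by unilaterally deviating to another admissible action. -/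
def IsEquilibrium {n : ℕ} (G : ResourceGame n) (u : ℕ → ℝ) (a : Fin n → Finset ℕ) : Prop :=
  Admissible G a ∧
    ∀ i : Fin n, ∀ s ∈ G.A i, util G u i (Function.update a i s) ≤ util G u i a

/-- The game has uncertainty at most `δ`:
`(1−δ)·y_true(r) ≤ y_i(r) ≤ (1+δ)·y_true(r)` for all agents `i` and resources `r`. -/
def Uncertain {n : ℕ} (G : ResourceGame n) (δ : ℝ) : Prop :=
  ∀ i : Fin n, ∀ r ∈ G.R,
    (1 - δ) * G.ytrue r ≤ G.y i r ∧ G.y i r ≤ (1 + δ) * G.ytrue r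

/-- The optimal (maximal) welfare `max_{a'} W(a'; y_true)` of a game. -/
noncomputable def optWelfare {n : ℕ} (G : ResourceGame n) (w : ℕ → ℝ) : ℝ :=
  sSup {x : ℝ | ∃ a, Admissible G a ∧ x = welfare G w G.ytrue a}

/-- The price of anarchy of the class `Γ^δ_{w,u,n}` of games with at most `n` agents,
basis functions `w, u`, and uncertainty at most `δ`: the infimum over games in the
class and equilibria `a` of `W(a; y_true)/max_{a'} W(a'; y_true)`. -/
noncomputable def PoA (w u : ℕ → ℝ) (δ : ℝ) (n : ℕ) : ℝ :=
  sInf {q : ℝ | ∃ m : ℕ, 1 ≤ m ∧ m ≤ n ∧ ∃ G : ResourceGame m,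
    Uncertain G δ ∧ ∃ a, IsEquilibrium G u a ∧
      q = welfare G w G.ytrue a / optWelfare G w}

/-- The set covering welfare basis: `w_sc(0) = 0` and `w_sc(k) = 1` for `k ≥ 1`. -/
noncomputable def wsc : ℕ → ℝ := fun k => if k = 0 then 0 else 1

/-- The optimal utility design for set covering games with uncertainty `δ`:
`u*_δ(0) = 0` and `u*_δ(j) = Σ_{k=j}^∞ (j−1)! / (B^{k−j+1}·(e^{1/B}−1)·k!)` for `j ≥ 1`,
where `B = (1+δ)/(1−δ)`. -/
noncomputable def uStar (δ : ℝ) : ℕ → ℝ := fun j =>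
  if j = 0 then 0 else
    ∑' k : ℕ, if j ≤ k then
      (Nat.factorial (j - 1) : ℝ) /
        (((1 + δ) / (1 - δ)) ^ (k - j + 1) * (Real.exp (1 / ((1 + δ) / (1 - δ))) - 1) *
          (Nat.factorial k : ℝ))
    else 0

/-- The `i`-th term of the series for `uStar δ (j + 1)`, reindexed to start at `i = 0`. -/
noncomputable def uTerm (B : ℝ) (j i : ℕ) : ℝ :=
  (Nat.factorial j : ℝ) /
    (B ^ (i + 1) * (Real.exp (1 / B) - 1) * (Nat.factorial (i + (j + 1)) : ℝ))

lemma uStar_zero (δ : ℝ) : uStar δ 0 = 0 := by simp [uStar]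

lemma uStar_succ (δ B : ℝ) (hB : B = (1 + δ) / (1 - δ)) (j : ℕ) :
    uStar δ (j + 1) = ∑' i, uTerm B j i := by
  subst hB
  have hinj : Function.Injective (fun i : ℕ => i + (j + 1)) := add_left_injective _
  simp only [uStar, Nat.add_eq_zero_iff, one_ne_zero, and_false, if_false]
  rw [← hinj.tsum_eq]
  · apply tsum_congr
    intro i
    have h1 : i + (j + 1) - (j + 1) = i := by omega
    simp only [uTerm, Nat.le_add_left, if_true, h1, Nat.add_sub_cancel]
  · intro k hk
    by_cases h : j + 1 ≤ k
    · exact ⟨k - (j + 1), by simp only; omega⟩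
    · exact absurd (if_neg h) hk

lemma exp_sub_one_pos {B : ℝ} (hB : 0 < B) : 0 < Real.exp (1 / B) - 1 := by
  have h : 0 < 1 / B := by positivity
  have := Real.add_one_lt_exp h.ne'
  linarith

lemma uTerm_nonneg {B : ℝ} (hB : 0 < B) (j i : ℕ) : 0 ≤ uTerm B j i := by
  have := exp_sub_one_pos hB
  unfold uTerm
  positivity

/-- For fixed `i`, the term `j! / (i + j + 1)! = 1 / ((j + 1) ⋯ (j + i + 1))` decreases
with `j`. -/
lemma uTerm_anti {B : ℝ} (hB : 0 < B) (j i : ℕ) : uTerm B (j + 1) i ≤ uTerm B j i := by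
  have := exp_sub_one_pos hB
  unfold uTerm
  rw [show i + (j + 1 + 1) = (i + (j + 1)) + 1 by ring, Nat.factorial_succ (i + (j + 1)),
    Nat.factorial_succ j]
  push_cast
  rw [div_le_div_iff₀ (by positivity) (by positivity)]
  have h : (0 : ℝ) ≤ (j.factorial : ℝ) *
      (B ^ (i + 1) * (Real.exp (1 / B) - 1) * ((i + (j + 1)).factorial : ℝ)) * i := by positivity
  have h' : (0 : ℝ) ≤ (j.factorial : ℝ) *
      (B ^ (i + 1) * (Real.exp (1 / B) - 1) * ((i + (j + 1)).factorial : ℝ)) := by positivity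
  nlinarith

lemma uTerm_zero_hasSum {B : ℝ} (hB : 0 < B) : HasSum (uTerm B 0) 1 := by
  have hE := exp_sub_one_pos hB
  have h : HasSum (fun n : ℕ => (1 / B) ^ n / (n.factorial : ℝ)) (Real.exp (1 / B)) := by
    rw [Real.exp_eq_exp_ℝ]
    exact NormedSpace.expSeries_div_hasSum_exp (1 / B)
  rw [← hasSum_nat_add_iff' 1] at h
  simp only [sum_range_one, pow_zero, Nat.factorial_zero, Nat.cast_one, div_one] at h
  have h2 := h.div_const (Real.exp (1 / B) - 1)
  rw [div_self hE.ne'] at h2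
  refine (funext fun i => ?_ : uTerm B 0 = _) ▸ h2
  unfold uTerm
  simp only [Nat.factorial_zero, Nat.cast_one, zero_add, one_div, inv_pow]
  simp only [one_div] at hE
  field_simp

lemma uTerm_summable {B : ℝ} (hB : 0 < B) (j : ℕ) : Summable (uTerm B j) := by
  induction j with
  | zero => exact (uTerm_zero_hasSum hB).summable
  | succ j ih => exact Summable.of_nonneg_of_le (uTerm_nonneg hB _) (uTerm_anti hB j) ih

lemma uStar_one {δ B : ℝ} (hB : B = (1 + δ) / (1 - δ)) (hB0 : 0 < B) : uStar δ 1 = 1 := by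
  rw [uStar_succ δ B hB 0, (uTerm_zero_hasSum hB0).tsum_eq]

lemma uStar_nonneg {δ B : ℝ} (hB : B = (1 + δ) / (1 - δ)) (hB0 : 0 < B)
    (j : ℕ) : 0 ≤ uStar δ j := by
  cases j with
  | zero => rw [uStar_zero]
  | succ j => rw [uStar_succ δ B hB]; exact tsum_nonneg (uTerm_nonneg hB0 j)

lemma uStar_anti {δ B : ℝ} (hB : B = (1 + δ) / (1 - δ)) (hB0 : 0 < B)
    (j : ℕ) : uStar δ (j + 2) ≤ uStar δ (j + 1) := by
  rw [uStar_succ δ B hB, uStar_succ δ B hB]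
  exact (uTerm_summable hB0 _).tsum_le_tsum (uTerm_anti hB0 j) (uTerm_summable hB0 _)

lemma uStar_le_one {δ B : ℝ} (hB : B = (1 + δ) / (1 - δ)) (hB0 : 0 < B)
    (j : ℕ) : uStar δ (j + 1) ≤ 1 := by
  induction j with
  | zero => rw [zero_add, uStar_one hB hB0]
  | succ j ih => exact (uStar_anti hB hB0 j).trans ih

/-- The constant `1 / E` is `B * (j + 1)` times the first term of the series; the remaining
terms, multiplied by `B * (j + 1)`, are those of the series for `uStar δ (j + 2)`. -/
lemma uStar_rec {δ B : ℝ} (hB : B = (1 + δ) / (1 - δ)) (hB0 : 0 < B)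
    (j : ℕ) :
    B * (j + 1) * uStar δ (j + 1) = uStar δ (j + 2) + 1 / (Real.exp (1 / B) - 1) := by
  have hE := exp_sub_one_pos hB0
  rw [uStar_succ δ B hB, uStar_succ δ B hB, (uTerm_summable hB0 j).tsum_eq_zero_add, mul_add,
    ← tsum_mul_left, add_comm]
  congr 1
  · apply tsum_congr
    intro i
    unfold uTerm
    rw [show i + 1 + (j + 1) = i + (j + 1 + 1) by ring, Nat.factorial_succ j]
    push_cast
    generalize Real.exp (1 / B) - 1 = E at *
    field_simp
    ring
  · unfold uTerm
    rw [zero_add, zero_add, Nat.factorial_succ j, pow_one]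
    push_cast
    generalize Real.exp (1 / B) - 1 = E at *
    field_simp

/-- The smoothness inequality at a single resource, where `α`, `x`, `ζ` are the numbers of
agents using it in the equilibrium only, in both joint actions, and in the comparison joint
action only. -/
lemma local_bound {δ B : ℝ} (hB : B = (1 + δ) / (1 - δ)) (hB0 : 0 < B)
    (hB1 : 1 ≤ B) (α x ζ : ℕ) :
    B * α * uStar δ (α + x) - ζ * uStar δ (α + x + 1) ≤
      (1 + 1 / (Real.exp (1 / B) - 1)) * wsc (α + x) - wsc (x + ζ) := by
  rcases Nat.eq_zero_or_pos (α + x) with h0 | hpos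
  · obtain ⟨rfl, rfl⟩ : α = 0 ∧ x = 0 := by omega
    rcases Nat.eq_zero_or_pos ζ with rfl | hζ
    · simp [wsc]
    · have : (1 : ℝ) ≤ ζ := by exact_mod_cast hζ
      simp [wsc, uStar_one hB hB0, hζ.ne', this]
  · obtain ⟨L, hL⟩ : ∃ L, α + x = L + 1 := ⟨α + x - 1, by omega⟩
    have hα : (α : ℝ) = L + 1 - x := by
      have : (α : ℝ) + x = L + 1 := by exact_mod_cast hL
      linarith
    have hrec := uStar_rec hB hB0 L
    have h1 := uStar_le_one hB hB0 (L + 1)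
    have h2 := uStar_anti hB hB0 L
    have h3 := uStar_nonneg hB hB0 (L + 1)
    have h4 := uStar_nonneg hB hB0 (L + 2)
    rw [hL, hα, show L + 1 + 1 = L + 2 from rfl]
    have hw : wsc (L + 1) = 1 := by simp [wsc]
    rw [hw]
    have h5 : B * (L + 1 - x) * uStar δ (L + 1) =
        uStar δ (L + 2) + 1 / (Real.exp (1 / B) - 1) - x * (B * uStar δ (L + 1)) := by
      rw [← hrec]; ring
    rw [h5]
    have h6 : uStar δ (L + 2) ≤ B * uStar δ (L + 1) := by nlinarith
    rcases Nat.eq_zero_or_pos ζ with rfl | hζ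
    · rcases Nat.eq_zero_or_pos x with rfl | hx
      · have h1' : uStar δ (L + 2) ≤ 1 := h1
        simp [wsc]
        linarith
      · have hx1 : (1 : ℝ) ≤ x := by exact_mod_cast hx
        have hw2 : wsc (x + 0) = 1 := by simp [wsc, hx.ne']
        rw [hw2]
        push_cast
        nlinarith
    · have hz1 : (1 : ℝ) ≤ ζ := by exact_mod_cast hζ
      have hw2 : wsc (x + ζ) = 1 := by
        exact if_neg (by omega)
      rw [hw2]
      have hx0 : (0 : ℝ) ≤ x * (B * uStar δ (L + 1)) := by positivity
      nlinarith

lemma load_update_of_mem {m : ℕ} (a : Fin m → Finset ℕ) (i : Fin m) (s : Finset ℕ) (r : ℕ)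
    (hr : r ∈ s) :
    load (Function.update a i s) r = if r ∈ a i then load a r else load a r + 1 := by
  have h : (univ.filter fun k => r ∈ Function.update a i s k) =
      insert i (univ.filter fun k => r ∈ a k) := by
    ext k
    by_cases hk : k = i
    · subst hk; simp [hr]
    · simp [hk]
  unfold load
  rw [h]
  split_ifs with hi
  · rw [insert_eq_of_mem (by simpa using hi)]
  · rw [card_insert_of_notMem (by simpa using hi)]

/-- The equilibrium inequality of agent `i` for the deviation `s`, as a sum over all resources:
resources in both `a i` and `s` cancel. -/
lemma equilibrium_sum_nonneg {m : ℕ} (G : ResourceGame m) (u : ℕ → ℝ) (a : Fin m → Finset ℕ)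
    (ha : IsEquilibrium G u a) (i : Fin m) (s : Finset ℕ) (hs : s ∈ G.A i) :
    0 ≤ ∑ r ∈ G.R, ((if r ∈ a i ∧ r ∉ s then G.y i r * u (load a r) else 0) -
      (if r ∉ a i ∧ r ∈ s then G.y i r * u (load a r + 1) else 0)) := by
  have h := ha.2 i s hs
  have hext : ∀ t ⊆ G.R, ∀ f : ℕ → ℝ, ∑ r ∈ t, f r = ∑ r ∈ G.R, if r ∈ t then f r else 0 := by
    intro t ht f
    rw [sum_ite_mem, inter_eq_right.mpr ht]
  unfold util at h
  rw [Function.update_self, hext _ (G.A_sub i _ (ha.1 i)), hext _ (G.A_sub i _ hs),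
    ← sub_nonneg, ← sum_sub_distrib] at h
  refine h.trans_eq (sum_congr rfl fun r _ => ?_)
  by_cases h1 : r ∈ a i <;> by_cases h2 : r ∈ s <;> simp [h1, h2, load_update_of_mem]

/-- for `δ ∈ [0,1)` and `B = (1+δ)/(1−δ)`, every set covering game (with
any finite number of agents) with utility basis `u*_δ` and uncertainty at most `δ`, every
equilibrium `a` and every admissible joint action `a'` satisfy
`W(a; y_true) ≥ (1 − e^{−1/B})·W(a'; y_true)`. -/
theorem uStar_welfare_bound (δ : ℝ) (hδ0 : 0 ≤ δ) (hδ1 : δ < 1)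
    (B : ℝ) (hB : B = (1 + δ) / (1 - δ))
    (m : ℕ) (G : ResourceGame m) (hG : Uncertain G δ)
    (a : Fin m → Finset ℕ) (ha : IsEquilibrium G (uStar δ) a)
    (a' : Fin m → Finset ℕ) (ha' : Admissible G a') :
    (1 - Real.exp (-(1 / B))) * welfare G wsc G.ytrue a' ≤ welfare G wsc G.ytrue a := by
  have hd : 0 < 1 - δ := by linarith
  have hB1 : 1 ≤ B := by rw [hB, le_div_iff₀ hd]; linarith
  have hB0 : 0 < B := by linarith
  have hBd : (1 - δ) * B = 1 + δ := by rw [hB]; field_simp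
  have hE := exp_sub_one_pos hB0
  set u := uStar δ with hu
  have hun : ∀ j, 0 ≤ u j := uStar_nonneg hB hB0
  -- Replace perceived values by true ones, at the cost of the factor `B`.
  have hagent : ∀ i, 0 ≤ ∑ r ∈ G.R, (1 - δ) * (G.ytrue r *
      (B * (if r ∈ a i ∧ r ∉ a' i then 1 else 0) * u (load a r) -
        (if r ∉ a i ∧ r ∈ a' i then 1 else 0) * u (load a r + 1))) := by
    intro i
    refine (equilibrium_sum_nonneg G u a ha i (a' i) (ha' i)).trans (sum_le_sum fun r hr => ?_)
    obtain ⟨hl, hh⟩ := hG i r hr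
    by_cases h1 : r ∈ a i <;> by_cases h2 : r ∈ a' i <;> simp only [h1, h2, not_true_eq_false,
      not_false_eq_true, and_true, and_false, if_true, if_false]
    · simp
    · have := mul_le_mul_of_nonneg_right hh (hun (load a r))
      rw [← hBd] at this
      linarith
    · have := mul_le_mul_of_nonneg_right hl (hun (load a r + 1))
      linarith
    · simp
  have hsum : 0 ≤ ∑ r ∈ G.R, G.ytrue r *
      ((1 + 1 / (Real.exp (1 / B) - 1)) * wsc (load a r) - wsc (load a' r)) := by
    have h0 : 0 ≤ ∑ i, ∑ r ∈ G.R, G.ytrue r *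
        (B * (if r ∈ a i ∧ r ∉ a' i then 1 else 0) * u (load a r) -
          (if r ∉ a i ∧ r ∈ a' i then 1 else 0) * u (load a r + 1)) := by
      refine sum_nonneg fun i _ => ?_
      have := hagent i
      rw [← mul_sum] at this
      exact nonneg_of_mul_nonneg_right this hd
    rw [sum_comm] at h0
    refine h0.trans (sum_le_sum fun r hr => ?_)
    rw [← mul_sum]
    refine mul_le_mul_of_nonneg_left ?_ (G.ytrue_pos r hr).le
    rw [sum_sub_distrib, ← sum_mul, ← sum_mul, ← mul_sum, sum_boole, sum_boole]
    have hla : load a r = (univ.filter fun i => r ∈ a i ∧ r ∉ a' i).card +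
        (univ.filter fun i => r ∈ a i ∧ r ∈ a' i).card := by
      unfold load
      rw [← card_filter_add_card_filter_not (s := univ.filter fun i => r ∈ a i)
        (fun i => r ∉ a' i)]
      simp [filter_filter]
    have hla' : load a' r = (univ.filter fun i => r ∈ a i ∧ r ∈ a' i).card +
        (univ.filter fun i => r ∉ a i ∧ r ∈ a' i).card := by
      unfold load
      rw [← card_filter_add_card_filter_not (s := univ.filter fun i => r ∈ a' i)
        (fun i => r ∈ a i)]
      simp [filter_filter, and_comm]
    rw [hla, hla']
    exact local_bound hB hB0 hB1 _ _ _
  have hW : welfare G wsc G.ytrue a' ≤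
      (1 + 1 / (Real.exp (1 / B) - 1)) * welfare G wsc G.ytrue a := by
    unfold welfare
    rw [mul_sum, ← sub_nonneg, ← sum_sub_distrib]
    refine hsum.trans_eq (sum_congr rfl fun r _ => ?_)
    ring
  have hc : 0 ≤ 1 - Real.exp (-(1 / B)) := by
    have : Real.exp (-(1 / B)) ≤ 1 := Real.exp_le_one_iff.mpr (by simp [hB0.le])
    linarith
  have hprod : (1 - Real.exp (-(1 / B))) * (1 + 1 / (Real.exp (1 / B) - 1)) = 1 := by
    rw [Real.exp_neg]
    have := Real.exp_pos (1 / B)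
    generalize Real.exp (1 / B) = e at *
    field_simp
    ring
  calc _ ≤ (1 - Real.exp (-(1 / B))) *
        ((1 + 1 / (Real.exp (1 / B) - 1)) * welfare G wsc G.ytrue a) :=
        mul_le_mul_of_nonneg_left hW hc
    _ = _ := by rw [← mul_assoc, hprod, one_mul]
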